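/- arXiv:2405.03160 — 2 statements merged into one kernel-verified Lean document; each statement's English description precedes it below -/
import Mathlib

section
/- Let A be an n×n dual quaternion Hermitian matrix with eigenvalues λ₁,…,λ_n, where λ_i = λ_{i,s} + λ_{i,d} ε. Then Mdet(A) = 0 if and only if there is an index i with λ_i = 0, or there are two distinct indices i ≠ j with λ_{i,s} = λ_{j,s} = 0 (i.e., A has at least one zero eigenvalue or two infinitesimal eigenvalues). -/
/-!
The Moore determinant of a unitarily diagonalizable Hermitian matrix is the product of its
eigenvalues, `Mdet A = ∏ λ i`. The theorem follows, because a product of dual numbers vanishes iff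
one factor is zero or two factors are infinitesimal: every other factor is a unit, and `ε² = 0`
(`dualNumber_prod_eq_zero_iff`).

The product formula is proved over any ring with involution in which self-adjoint elements are
central and `2` is not a zero divisor. Let `N S` be the Moore determinant of the principal submatrix
on the index set `S`. Removing the least index from its cycle, one vertex after another, shows that
`N S` is expanded along the cycles through that index (`isMooreFamily_mooreSub`). For a Hermitian
matrix, reversing cycles shows that the sum over all cycles on a given vertex set is self-adjoint,
hence central, and `tr (x y) = tr (y x)` shows that it does not depend on the vertex from which the
cycles are read (`pathSum_rotate`). So the expansion holds along every index
(`IsMooreFamily.expand`). This yields the cofactor identity `Adj · A = Mdet A · 1`, and in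
particular `Mdet A` annihilates every kernel vector of `A` (`IsMooreFamily.mul_eq_zero_of_ker`).

Now let `U` be unitary. The map `x ↦ Mdet (U* diag(x) U)` is a form of degree `n` in the `n` central
variables `x i`. If some `x l` is zero, column `l` of `U*` is a unimodular kernel vector, so the form
vanishes. A form of degree `n` with this property is `∏ x i` times its value at `x = 1`
(`IsForm.eq_prod_smul`), and that value is the Moore determinant of the identity matrix, `1`.
-/

/-!
Formalization background for "Moore Determinant of Dual Quaternion Hermitian Matrices"
(Cui, Qi, Song, Wang).

A dual quaternion is `q = q_s + q_d ε` with `q_s, q_d` quaternions, `ε² = 0`; it is modeled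
by `DualNumber (Quaternion ℝ)`.
-/

open Quaternion Matrix

noncomputable section

/-- Dual quaternions: dual numbers over the quaternions. -/
abbrev DualQuaternion : Type := DualNumber (Quaternion ℝ)

namespace DQPaper

/-- Conjugation of dual quaternions: `(q_s + q_d ε)* = q_s* + q_d* ε`. -/
instance : Star DualQuaternion := ⟨fun q => (star q.fst, star q.snd)⟩

/-- The real part of a dual quaternion `q = q_s + q_d ε`, as the dual number
`Re(q_s) + Re(q_d) ε`. -/
def dqRe (q : DualQuaternion) : DualNumber ℝ := (q.fst.re, q.snd.re)

/-- The embedding of the dual numbers into the dual quaternions. -/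
def toDQ (d : DualNumber ℝ) : DualQuaternion := ((d.fst : ℍ[ℝ]), (d.snd : ℍ[ℝ]))

/-- A dual quaternion is a dual number if its standard and dual parts are both real. -/
def IsDualNum (q : DualQuaternion) : Prop := ∃ d : DualNumber ℝ, q = toDQ d

/-- A dual number `a + b ε` is nonnegative if `a > 0`, or `a = 0` and `b ≥ 0`. -/
def DNNonneg (u : DualNumber ℝ) : Prop := 0 < u.fst ∨ (u.fst = 0 ∧ 0 ≤ u.snd)

/-- The order on dual numbers: `u ≤ v` iff `v - u` is nonnegative. -/
def dnLe (u v : DualNumber ℝ) : Prop := DNNonneg (v - u)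

open Classical in
/-- The magnitude of a dual quaternion `p = p_s + p_d ε`, as a dual number:
`|p| = |p_s| + ((p_s* p_d + p_d* p_s)/(2|p_s|)) ε` if `p_s ≠ 0`, and `|p| = |p_d| ε`
otherwise. -/
def dqMag (p : DualQuaternion) : DualNumber ℝ :=
  if p.fst = 0 then (0, ‖p.snd‖)
  else (‖p.fst‖, ((star p.fst * p.snd + star p.snd * p.fst).re) / (2 * ‖p.fst‖))

/-- The cycle of the permutation `σ` containing `i`, listed as `[i, σ i, σ² i, …]`. -/
def cycleList {n : ℕ} (σ : Equiv.Perm (Fin n)) (i : Fin n) : List (Fin n) :=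
  i :: (((List.range n).map (fun k => (σ ^ (k + 1)) i)).takeWhile (fun j => decide (j ≠ i)))

/-- The leaders (largest element of each cycle) of `σ`, listed in decreasing order;
this is the normalization used in the Chen determinant. -/
def chenLeaders {n : ℕ} (σ : Equiv.Perm (Fin n)) : List (Fin n) :=
  ((List.finRange n).filter (fun i => (cycleList σ i).all (fun j => decide (j ≤ i)))).reverse

/-- All of `Fin n` listed in the normalized cycle order of the Chen determinant:
each cycle is led by its largest element, and cycles are ordered by decreasing leaders
(so the first cycle contains the last index). -/
def chenOrder {n : ℕ} (σ : Equiv.Perm (Fin n)) : List (Fin n) :=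
  ((chenLeaders σ).map (cycleList σ)).flatten

/-- The Chen determinant of a square matrix over a (possibly noncommutative) ring:
`Cdet A = Σ_σ (−1)^{n−r} a_σ`, where `σ` runs over all permutations written in the
normalized cycle form with `r` disjoint cycles, and `a_σ` is the ordered product of the
entries `A i (σ i)` along the normalized cycle order. -/
def Cdet {n : ℕ} {R : Type*} [Ring R] (A : Matrix (Fin n) (Fin n) R) : R :=
  ∑ σ : Equiv.Perm (Fin n),
    (-1 : R) ^ (n - (chenLeaders σ).length) * ((chenOrder σ).map (fun i => A i (σ i))).prod

/-- The leaders (smallest element of each cycle) of `σ`, listed in decreasing order;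
this is the normalization used in the Moore determinant. -/
def mooreLeaders {n : ℕ} (σ : Equiv.Perm (Fin n)) : List (Fin n) :=
  ((List.finRange n).filter (fun i => (cycleList σ i).all (fun j => decide (i ≤ j)))).reverse

/-- All of `Fin n` listed in the normalized cycle order of the Moore determinant:
each cycle is led by its smallest element, and cycles are ordered by decreasing leaders. -/
def mooreOrder {n : ℕ} (σ : Equiv.Perm (Fin n)) : List (Fin n) :=
  ((mooreLeaders σ).map (cycleList σ)).flatten

/-- The Moore determinant of a square matrix over a (possibly noncommutative) ring:
`Mdet A = Σ_σ s(σ) a_σ`, where `s(σ)` is the sign of `σ` and `a_σ` is the ordered product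
of the entries `A i (σ i)` along the normalized (Moore) cycle order. -/
def Mdet {n : ℕ} {R : Type*} [Ring R] (A : Matrix (Fin n) (Fin n) R) : R :=
  ∑ σ : Equiv.Perm (Fin n),
    ((Equiv.Perm.sign σ : ℤ) : R) * ((mooreOrder σ).map (fun i => A i (σ i))).prod

/-- The switching matrix `P_{ij}`: the identity matrix with rows `i` and `j` interchanged. -/
def switchMatrix {R : Type*} [Ring R] {n : ℕ} (i j : Fin n) : Matrix (Fin n) (Fin n) R :=
  Matrix.of fun k l =>
    if (k = i ∧ l = j) ∨ (k = j ∧ l = i) ∨ (k = l ∧ k ≠ i ∧ k ≠ j) then 1 else 0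

/-- The multiplication matrix `P_{i;c}`: the identity matrix with the `(i,i)` entry
replaced by `c`. -/
def mulMatrix {R : Type*} [Ring R] {n : ℕ} (i : Fin n) (c : R) : Matrix (Fin n) (Fin n) R :=
  Matrix.of fun k l => if k = l then (if k = i then c else 1) else 0

/-- The addition matrix `P_{ij;c}`: the identity matrix with an extra entry `c` in
position `(j,i)`, so that `P_{ij;c} * A` adds `c` times row `i` of `A` to row `j`. -/
def addMatrix {R : Type*} [Ring R] {n : ℕ} (i j : Fin n) (c : R) : Matrix (Fin n) (Fin n) R :=
  Matrix.of fun k l => (if k = l then 1 else 0) + (if k = j ∧ l = i then c else 0)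

/-- The product `A i₁ i₂ * A i₂ i₃ * ⋯ * A i_{m-1} i_m` of matrix entries along a chain of
indices `[i₁, …, i_m]`; applied to a closed chain `[i₁, …, i_m, i₁]` it gives the cycle
product `⟨i₁ … i_m i₁⟩ = a_{i₁ i₂} ⋯ a_{i_m i₁}`. -/
def chainProd {n : ℕ} (A : Matrix (Fin n) (Fin n) DualQuaternion) :
    List (Fin n) → DualQuaternion
  | [] => 1
  | [_] => 1
  | i :: j :: rest => A i j * chainProd A (j :: rest)

/-- A dual number `lam` is a (right) eigenvalue of the dual quaternion matrix `A` if
`A x = x lam` for some appreciable dual quaternion vector `x` (i.e. one whose standard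
part is nonzero). -/
def IsEigenvalue {n : ℕ} (A : Matrix (Fin n) (Fin n) DualQuaternion)
    (lam : DualNumber ℝ) : Prop :=
  ∃ x : Fin n → DualQuaternion,
    (fun i => (x i).fst) ≠ 0 ∧ A.mulVec x = fun i => x i * toDQ lam

/-- The dual quaternion Hermitian matrix `A` has the dual numbers `lam 1, …, lam n` as its
eigenvalues (counted with multiplicity), via the unitary diagonalization `U A U* = diag(lam)`
of Qi and Luo (2023). -/
def HasEigenvalues {n : ℕ} (A : Matrix (Fin n) (Fin n) DualQuaternion)
    (lam : Fin n → DualNumber ℝ) : Prop :=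
  ∃ U : Matrix (Fin n) (Fin n) DualQuaternion,
    Uᴴ * U = 1 ∧ U * A * Uᴴ = Matrix.diagonal fun i => toDQ (lam i)

/-! ### Sums over paths -/

section Paths
variable {ι R : Type*} [DecidableEq ι] [Ring R]

/-- The sum of `a i k₁ * a k₁ k₂ * ⋯ * a k_t x` over all orderings `k₁, …, k_t` of the finite set `T`
(so `a i x` for `T = ∅`). The end points `i`, `x` are not required to lie outside `T`. -/
def pathSum (a : ι → ι → R) (T : Finset ι) (i x : ι) : R :=
  (if T = ∅ then a i x else 0) + ∑ k ∈ T.attach, a i k * pathSum a (T.erase k) k x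
termination_by T.card
decreasing_by exact Finset.card_erase_lt_of_mem k.2

lemma pathSum_eq (a : ι → ι → R) (T : Finset ι) (i x : ι) :
    pathSum a T i x =
      (if T = ∅ then a i x else 0) + ∑ k ∈ T, a i k * pathSum a (T.erase k) k x := by
  rw [pathSum]
  congr 1
  exact Finset.sum_attach T (fun k => a i k * pathSum a (T.erase k) k x)

lemma pathSum_empty (a : ι → ι → R) (i x : ι) : pathSum a ∅ i x = a i x := by
  rw [pathSum_eq]; simp

/-- Splitting off the last edge instead of the first one. -/
lemma pathSum_eq_right (a : ι → ι → R) (T : Finset ι) (i x : ι) :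
    pathSum a T i x =
      (if T = ∅ then a i x else 0) + ∑ k ∈ T, pathSum a (T.erase k) i k * a k x := by
  induction hc : T.card using Nat.strong_induction_on generalizing T i x with
  | _ c ih =>
    subst hc
    rw [pathSum_eq]
    congr 1
    have h1 : ∀ k ∈ T, a i k * pathSum a (T.erase k) k x =
        a i k * (if T.erase k = ∅ then a k x else 0) +
          ∑ l ∈ T.erase k, a i k * (pathSum a ((T.erase k).erase l) k l * a l x) := by
      intro k hk
      rw [ih _ (Finset.card_erase_lt_of_mem hk) (T.erase k) k x rfl, mul_add, Finset.mul_sum]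
    have h2 : ∀ l ∈ T, pathSum a (T.erase l) i l * a l x =
        a i l * (if T.erase l = ∅ then a l x else 0) +
          ∑ k ∈ T.erase l, a i k * (pathSum a ((T.erase k).erase l) k l * a l x) := by
      intro l _
      rw [pathSum_eq, add_mul, Finset.sum_mul]
      congr 1
      · split_ifs <;> simp
      · refine Finset.sum_congr rfl fun k _ => ?_
        rw [Finset.erase_right_comm, mul_assoc]
    rw [Finset.sum_congr rfl h1, Finset.sum_congr rfl h2, Finset.sum_add_distrib,
      Finset.sum_add_distrib]
    congr 1
    refine Finset.sum_comm' ?_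
    intro k l
    simp only [Finset.mem_erase]
    tauto

lemma sum_erase_powerset {M : Type*} [AddCommMonoid M] (S : Finset ι)
    (g : ι → Finset ι → M) :
    ∑ k ∈ S, ∑ T ∈ (S.erase k).powerset, g k T =
      ∑ T ∈ S.powerset, ∑ k ∈ T, g k (T.erase k) := by
  rw [Finset.sum_sigma', Finset.sum_sigma']
  refine Finset.sum_bij' (fun p _ => ⟨insert p.1 p.2, p.1⟩) (fun p _ => ⟨p.2, p.1.erase p.2⟩)
    ?_ ?_ ?_ ?_ ?_
  · rintro ⟨k, T⟩ h
    simp only [Finset.mem_sigma, Finset.mem_powerset] at h ⊢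
    exact ⟨Finset.insert_subset h.1 (h.2.trans (Finset.erase_subset _ _)),
      Finset.mem_insert_self _ _⟩
  · rintro ⟨T, k⟩ h
    simp only [Finset.mem_sigma, Finset.mem_powerset] at h ⊢
    exact ⟨h.1 h.2, Finset.erase_subset_erase _ h.1⟩
  · rintro ⟨k, T⟩ h
    simp only [Finset.mem_sigma, Finset.mem_powerset, Finset.subset_erase] at h
    simp [Finset.erase_insert h.2.2]
  · rintro ⟨T, k⟩ h
    simp only [Finset.mem_sigma, Finset.mem_powerset] at h
    simp [Finset.insert_erase h.2]
  · rintro ⟨k, T⟩ h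
    simp only [Finset.mem_sigma, Finset.mem_powerset, Finset.subset_erase] at h
    simp [Finset.erase_insert h.2.2]

/-- Both sides sum `f T₁ T₂` over the pairs of disjoint subsets of `V`. -/
lemma sum_powerset_powerset {M : Type*} [AddCommMonoid M] (V : Finset ι)
    (f : Finset ι → Finset ι → M) :
    ∑ T ∈ V.powerset, ∑ T₁ ∈ T.powerset, f T₁ (T \ T₁) =
      ∑ T₁ ∈ V.powerset, ∑ T₂ ∈ (V \ T₁).powerset, f T₁ T₂ := by
  rw [Finset.sum_sigma', Finset.sum_sigma']
  refine Finset.sum_bij' (fun p _ => ⟨p.2, p.1 \ p.2⟩) (fun p _ => ⟨p.1 ∪ p.2, p.1⟩)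
    ?_ ?_ ?_ ?_ ?_
  · rintro ⟨T, T₁⟩ h
    simp only [Finset.mem_sigma, Finset.mem_powerset] at h ⊢
    exact ⟨h.2.trans h.1, Finset.sdiff_subset_sdiff h.1 le_rfl⟩
  · rintro ⟨T₁, T₂⟩ h
    simp only [Finset.mem_sigma, Finset.mem_powerset] at h ⊢
    exact ⟨Finset.union_subset h.1 (h.2.trans Finset.sdiff_subset), Finset.subset_union_left⟩
  · rintro ⟨T, T₁⟩ h
    simp only [Finset.mem_sigma, Finset.mem_powerset] at h
    simp [Finset.union_eq_right.2 h.2]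
  · rintro ⟨T₁, T₂⟩ h
    simp only [Finset.mem_sigma, Finset.mem_powerset, Finset.subset_sdiff] at h
    simp [Finset.union_sdiff_cancel_left h.2.2.symm]
  · rintro ⟨T, T₁⟩ h
    rfl

lemma sum_powerset_swap {M : Type*} [AddCommMonoid M] (V : Finset ι)
    (f : Finset ι → Finset ι → M) :
    ∑ T₁ ∈ V.powerset, ∑ T₂ ∈ (V \ T₁).powerset, f T₁ T₂ =
      ∑ T₂ ∈ V.powerset, ∑ T₁ ∈ (V \ T₂).powerset, f T₁ T₂ := by
  refine Finset.sum_comm' ?_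
  intro T₁ T₂
  simp only [Finset.mem_powerset, Finset.subset_sdiff, disjoint_comm (a := T₁)]
  tauto

lemma erase_sdiff_erase_of_mem (S T : Finset ι) {k : ι} (hk : k ∈ T) :
    S.erase k \ T.erase k = S \ T := by
  ext x
  by_cases hx : x = k <;> simp [hx, hk]

/-- Cutting every path at an interior vertex `j`. -/
lemma pathSum_split (a : ι → ι → R) (T : Finset ι) (i x : ι) {j : ι} (hj : j ∈ T) :
    pathSum a T i x = ∑ T₁ ∈ (T.erase j).powerset,
      pathSum a T₁ i j * pathSum a (T.erase j \ T₁) j x := by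
  induction hc : T.card using Nat.strong_induction_on generalizing T i with
  | _ c ih =>
    subst hc
    have hR : ∀ T₁ ∈ (T.erase j).powerset,
        pathSum a T₁ i j * pathSum a (T.erase j \ T₁) j x =
          (if T₁ = ∅ then a i j * pathSum a (T.erase j) j x else 0) +
          ∑ k ∈ T₁, a i k * pathSum a (T₁.erase k) k j *
            pathSum a ((T.erase j).erase k \ T₁.erase k) j x := by
      intro T₁ _
      rw [pathSum_eq a T₁, add_mul, Finset.sum_mul]
      congr 1
      · split_ifs with h
        · subst h; simp
        · simp
      · refine Finset.sum_congr rfl fun k hk => ?_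
        rw [erase_sdiff_erase_of_mem _ _ hk]
    rw [Finset.sum_congr rfl hR, Finset.sum_add_distrib,
      ← sum_erase_powerset (T.erase j) (fun k T₁ => a i k * pathSum a T₁ k j *
            pathSum a ((T.erase j).erase k \ T₁) j x), pathSum_eq, if_neg
      (Finset.ne_empty_of_mem hj), zero_add, ← Finset.add_sum_erase _ _ hj]
    congr 1
    · simp
    · refine Finset.sum_congr rfl fun k hk => ?_
      rw [Finset.mem_erase] at hk
      rw [ih _ (Finset.card_erase_lt_of_mem hk.2) (T.erase k) k
        (Finset.mem_erase.2 ⟨hk.1.symm, hj⟩) rfl, Finset.mul_sum, Finset.erase_right_comm]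
      simp only [mul_assoc]

variable [StarRing R]

/-- For a Hermitian `a`, conjugation reverses paths. -/
lemma star_pathSum {a : ι → ι → R} (ha : ∀ i j, star (a i j) = a j i) (T : Finset ι)
    (i x : ι) : star (pathSum a T i x) = pathSum a T x i := by
  induction hc : T.card using Nat.strong_induction_on generalizing T i x with
  | _ c ih =>
    subst hc
    rw [pathSum_eq, pathSum_eq_right a T x i, star_add, star_sum]
    congr 1
    · split_ifs <;> simp [ha]
    · refine Finset.sum_congr rfl fun k hk => ?_
      rw [star_mul, ha, ih _ (Finset.card_erase_lt_of_mem hk) _ _ _ rfl]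

/-- The trace identity `tr (x y) = tr (y x)` with `tr z = z + star z`, in a ring with involution
all of whose self-adjoint elements are central. -/
lemma mul_add_star_comm (hc : ∀ x : R, star x = x → ∀ y, x * y = y * x) (x y : R) :
    x * y + star (x * y) = y * x + star (y * x) := by
  have hx := hc (x + star x) (by simp [add_comm]) y
  have hy := hc (y + star y) (by simp [add_comm]) (star x)
  simp only [star_mul]
  have : x * y + star y * star x - (y * x + star x * star y) =
    ((x + star x) * y - y * (x + star x)) +
     ((y + star y) * star x - star x * (y + star y)) := by noncomm_ring
  rw [hx, hy, sub_self, sub_self, add_zero] at this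
  exact sub_eq_zero.1 this

/-- The sum over all cycles on a given vertex set does not depend on the starting vertex. Both sums
are self-adjoint, have the same trace, and `2` is not a zero divisor. -/
lemma pathSum_rotate (hc : ∀ x : R, star x = x → ∀ y, x * y = y * x)
    (h2 : ∀ x : R, x + x = 0 → x = 0)
    {a : ι → ι → R} (ha : ∀ i j, star (a i j) = a j i) (T : Finset ι) {i j : ι}
    (hi : i ∉ T) (hj : j ∉ T) :
    pathSum a (insert j T) i i = pathSum a (insert i T) j j := by
  have e1 := pathSum_split a (insert j T) i i (Finset.mem_insert_self j T)
  have e2 := pathSum_split a (insert i T) j j (Finset.mem_insert_self i T)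
  rw [Finset.erase_insert hj] at e1
  rw [Finset.erase_insert hi] at e2
  have e2' : pathSum a (insert i T) j j = ∑ T₁ ∈ T.powerset,
      pathSum a (T \ T₁) j i * pathSum a T₁ i j := by
    rw [e2]
    refine Finset.sum_bij' (fun U _ => T \ U) (fun U _ => T \ U) ?_ ?_ ?_ ?_ ?_
    · intro U _; simp
    · intro U _; simp
    · intro U hU; exact Finset.sdiff_sdiff_eq_self (Finset.mem_powerset.1 hU)
    · intro U hU; exact Finset.sdiff_sdiff_eq_self (Finset.mem_powerset.1 hU)
    · intro U hU; simp only [Finset.sdiff_sdiff_eq_self (Finset.mem_powerset.1 hU)]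
  have s1 := star_pathSum ha (insert j T) i i
  have s2 := star_pathSum ha (insert i T) j j
  have key : pathSum a (insert j T) i i + star (pathSum a (insert j T) i i) =
      pathSum a (insert i T) j j + star (pathSum a (insert i T) j j) := by
    rw [e1, e2', star_sum, star_sum, ← Finset.sum_add_distrib, ← Finset.sum_add_distrib]
    exact Finset.sum_congr rfl fun U _ => mul_add_star_comm hc _ _
  rw [s1, s2] at key
  refine sub_eq_zero.1 (h2 _ ?_)
  rw [sub_add_sub_comm, key, sub_self]

end Paths

/-! ### Moore families and the cofactor identity -/

section Family
variable {ι R : Type*} [LinearOrder ι] [Ring R]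

/-- The signed sum over all cyclic orderings of `{i} ∪ T`, each read from `i`; a cycle of length
`T.card + 1` has sign `(-1) ^ T.card`. -/
def cycSum (a : ι → ι → R) (T : Finset ι) (i : ι) : R := (-1) ^ T.card * pathSum a T i i

/-- `N S` behaves as the Moore determinant of the principal submatrix of `a` on `S`: it is expanded
along the cycle `{m} ∪ T` through the least index `m` of `S`. That cycle stands last, as the Moore
normalization orders the cycles by decreasing leaders. -/
structure IsMooreFamily (a : ι → ι → R) (N : Finset ι → R) : Prop where
  empty : N ∅ = 1
  expand_min : ∀ (S : Finset ι) (m : ι), m ∈ S → (∀ x ∈ S, m ≤ x) →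
    N S = ∑ T ∈ (S.erase m).powerset, N (S.erase m \ T) * cycSum a T m

lemma neg_one_pow_comm (k : ℕ) (y : R) : (-1 : R) ^ k * y = y * (-1) ^ k :=
  ((Commute.neg_one_left y).pow_left k).eq

/-- The expansion of `N S` along `m`, sorted by whether `i` lies on the cycle through `m`; where it
does not, the remaining factor is expanded along `i`. -/
lemma sum_expand_eq {a : ι → ι → R} {N : Finset ι → R} {S : Finset ι} {i m : ι}
    (him : i ≠ m) (hi : i ∈ S)
    (ih : ∀ S' : Finset ι, S'.card < S.card → ∀ i ∈ S',
      N S' = ∑ T ∈ (S'.erase i).powerset, N (S'.erase i \ T) * cycSum a T i) (hm : m ∈ S) :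
    ∑ T ∈ (S.erase m).powerset, N (S.erase m \ T) * cycSum a T m =
      ∑ T₁ ∈ ((S.erase m).erase i).powerset,
        ∑ T₂ ∈ ((S.erase m).erase i \ T₁).powerset,
          N (((S.erase m).erase i \ T₁) \ T₂) * cycSum a T₂ i * cycSum a T₁ m +
      ∑ T ∈ ((S.erase m).erase i).powerset,
        N ((S.erase m).erase i \ T) * cycSum a (insert i T) m := by
  have hi' : i ∈ S.erase m := Finset.mem_erase.2 ⟨him, hi⟩
  conv_lhs => rw [← Finset.insert_erase hi']
  rw [Finset.sum_powerset_insert (Finset.notMem_erase _ _), Finset.insert_erase hi']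
  congr 1
  · refine Finset.sum_congr rfl fun T hT => ?_
    rw [Finset.mem_powerset, Finset.subset_erase] at hT
    have hcard : (S.erase m \ T).card < S.card :=
      lt_of_le_of_lt (Finset.card_le_card Finset.sdiff_subset) (Finset.card_erase_lt_of_mem hm)
    rw [ih _ hcard i (Finset.mem_sdiff.2 ⟨hi', hT.2⟩), Finset.sum_mul,
      ← Finset.erase_sdiff_comm (S.erase m) T i]
  · refine Finset.sum_congr rfl fun T hT => ?_
    rw [Finset.sdiff_insert, ← Finset.erase_sdiff_comm]

variable [StarRing R]

lemma cycSum_comm (hc : ∀ x : R, star x = x → ∀ y, x * y = y * x)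
    {a : ι → ι → R} (ha : ∀ i j, star (a i j) = a j i) (T : Finset ι) (i : ι) (y : R) :
    cycSum a T i * y = y * cycSum a T i := by
  have h := hc _ (star_pathSum ha T i i) y
  rw [cycSum, mul_assoc, h, ← mul_assoc, neg_one_pow_comm, mul_assoc]

lemma cycSum_rotate (hc : ∀ x : R, star x = x → ∀ y, x * y = y * x)
    (h2 : ∀ x : R, x + x = 0 → x = 0)
    {a : ι → ι → R} (ha : ∀ i j, star (a i j) = a j i) (T : Finset ι) {i j : ι}
    (hi : i ∉ T) (hj : j ∉ T) :
    cycSum a (insert j T) i = cycSum a (insert i T) j := by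
  rw [cycSum, cycSum, pathSum_rotate hc h2 ha T hi hj, Finset.card_insert_of_notMem hi,
    Finset.card_insert_of_notMem hj]

/-- For Hermitian `a` the expansion holds along every index, not only the least one: expanding along
`m` and then along `i` is symmetric in the two, since cycle sums are central and rotation invariant. -/
lemma IsMooreFamily.expand (hc : ∀ x : R, star x = x → ∀ y, x * y = y * x)
    (h2 : ∀ x : R, x + x = 0 → x = 0)
    {a : ι → ι → R} (ha : ∀ i j, star (a i j) = a j i) {N : Finset ι → R}
    (hN : IsMooreFamily a N) (S : Finset ι) (i : ι) (hi : i ∈ S) :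
    N S = ∑ T ∈ (S.erase i).powerset, N (S.erase i \ T) * cycSum a T i := by
  induction hcard : S.card using Nat.strong_induction_on generalizing S i with
  | _ c ih =>
    subst hcard
    have ih' : ∀ S' : Finset ι, S'.card < S.card → ∀ i ∈ S',
      N S' = ∑ T ∈ (S'.erase i).powerset, N (S'.erase i \ T) * cycSum a T i :=
      fun S' h i hi => ih _ h S' i hi rfl
    set m := S.min' ⟨i, hi⟩
    have hm : m ∈ S := Finset.min'_mem _ _
    rw [hN.expand_min S m hm (fun x hx => Finset.min'_le _ _ hx)]
    by_cases him : i = m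
    · rw [him]
    rw [sum_expand_eq him hi ih' hm, sum_expand_eq (Ne.symm him) hm ih' hi,
      Finset.erase_right_comm (a := i) (b := m), sum_powerset_swap]
    congr 1
    · refine Finset.sum_congr rfl fun T₁ _ => Finset.sum_congr rfl fun T₂ _ => ?_
      rw [sdiff_right_comm, mul_assoc, cycSum_comm hc ha, mul_assoc]
    · refine Finset.sum_congr rfl fun T hT => ?_
      rw [Finset.mem_powerset, Finset.subset_erase, Finset.subset_erase] at hT
      rw [cycSum_rotate hc h2 ha T hT.1.2 hT.2]

/-- The Moore determinant of a Hermitian matrix is central. -/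
lemma IsMooreFamily.comm (hc : ∀ x : R, star x = x → ∀ y, x * y = y * x)
    {a : ι → ι → R} (ha : ∀ i j, star (a i j) = a j i) {N : Finset ι → R}
    (hN : IsMooreFamily a N) (S : Finset ι) (y : R) : N S * y = y * N S := by
  induction hcard : S.card using Nat.strong_induction_on generalizing S with
  | _ c ih =>
    subst hcard
    obtain rfl | hS := S.eq_empty_or_nonempty
    · simp [hN.empty]
    rw [hN.expand_min S _ (S.min'_mem hS) (fun x hx => Finset.min'_le _ _ hx), Finset.sum_mul,
      Finset.mul_sum]
    refine Finset.sum_congr rfl fun T _ => ?_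
    rw [mul_assoc, cycSum_comm hc ha, ← mul_assoc, ← mul_assoc,
      ih _ (lt_of_le_of_lt (Finset.card_le_card Finset.sdiff_subset)
        (Finset.card_erase_lt_of_mem (S.min'_mem hS))) _ rfl]

/-- The off-diagonal part of the cofactor identity `Adj · A = Mdet · 1`. Expanding each `N (U \ T)`
along `j` produces pairs (path from `i` to `j`, cycle through `j`), and concatenating the two gives
a path from `i` to `j` with `j` as an interior vertex; these cancel the terms with `j ∈ T`. -/
lemma IsMooreFamily.cofactor_off_diag (hc : ∀ x : R, star x = x → ∀ y, x * y = y * x)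
    (h2 : ∀ x : R, x + x = 0 → x = 0)
    {a : ι → ι → R} (ha : ∀ i j, star (a i j) = a j i) {N : Finset ι → R}
    (hN : IsMooreFamily a N) (U : Finset ι) (i j : ι) (hj : j ∈ U) :
    ∑ T ∈ U.powerset, N (U \ T) * ((-1) ^ T.card * pathSum a T i j) = 0 := by
  set V := U.erase j with hV
  rw [← Finset.insert_erase hj, Finset.sum_powerset_insert (Finset.notMem_erase _ _),
    Finset.insert_erase hj, ← hV]
  have h1 : ∀ T ∈ V.powerset, N (U \ T) * ((-1) ^ T.card * pathSum a T i j) =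
      ∑ T₂ ∈ (V \ T).powerset,
        N (V \ (T ∪ T₂)) * ((-1) ^ T.card * (-1) ^ T₂.card *
          (pathSum a T i j * pathSum a T₂ j j)) := by
    intro T hT
    rw [Finset.mem_powerset, Finset.subset_erase] at hT
    rw [hN.expand hc h2 ha (U \ T) j (Finset.mem_sdiff.2 ⟨hj, hT.2⟩), Finset.sum_mul,
      ← Finset.erase_sdiff_comm, ← hV]
    refine Finset.sum_congr rfl fun T₂ _ => ?_
    rw [sdiff_sdiff_left, Finset.sup_eq_union, mul_assoc, cycSum_comm hc ha, cycSum]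
    congr 1
    rw [mul_assoc, mul_assoc, ← mul_assoc (pathSum a T i j), ← neg_one_pow_comm, mul_assoc]
  have h3 : ∀ T ∈ V.powerset,
      N (U \ insert j T) * ((-1) ^ (insert j T).card * pathSum a (insert j T) i j) =
      - ∑ T₁ ∈ T.powerset,
        N (V \ (T₁ ∪ (T \ T₁))) * ((-1) ^ T₁.card * (-1) ^ (T \ T₁).card *
          (pathSum a T₁ i j * pathSum a (T \ T₁) j j)) := by
    intro T hT
    rw [Finset.mem_powerset, Finset.subset_erase] at hT
    rw [pathSum_split a (insert j T) i j (Finset.mem_insert_self _ _),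
      Finset.erase_insert hT.2, Finset.card_insert_of_notMem hT.2, Finset.sdiff_insert,
      ← Finset.erase_sdiff_comm, ← hV, Finset.mul_sum, Finset.mul_sum,
      ← Finset.sum_neg_distrib]
    refine Finset.sum_congr rfl fun T₁ hT₁ => ?_
    rw [Finset.mem_powerset] at hT₁
    rw [Finset.union_sdiff_of_subset hT₁, ← pow_add, add_comm T₁.card,
      Finset.card_sdiff_add_card_eq_card hT₁, pow_succ]
    noncomm_ring
  rw [Finset.sum_congr rfl h1, Finset.sum_congr rfl h3, Finset.sum_neg_distrib,
    sum_powerset_powerset V (fun T₁ T₂ => N (V \ (T₁ ∪ T₂)) *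
      ((-1) ^ T₁.card * (-1) ^ T₂.card * (pathSum a T₁ i j * pathSum a T₂ j j))),
    add_neg_cancel]

/-- The cofactor identity applied to a kernel vector `y` of `a`: multiplying `a y = 0` on the left
by row `i` of the adjugate gives `Mdet · y i = 0`. -/
lemma IsMooreFamily.mul_eq_zero_of_ker [Fintype ι]
    (hc : ∀ x : R, star x = x → ∀ y, x * y = y * x)
    (h2 : ∀ x : R, x + x = 0 → x = 0)
    {a : ι → ι → R} (ha : ∀ i j, star (a i j) = a j i) {N : Finset ι → R}
    (hN : IsMooreFamily a N) (y : ι → R) (hy : ∀ k, ∑ j, a k j * y j = 0) (i : ι) :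
    N Finset.univ * y i = 0 := by
  set U : Finset ι := Finset.univ.erase i with hU
  have hrow : ∀ j, ∑ T ∈ U.powerset, N (U \ T) * ((-1) ^ T.card * pathSum a T i j) =
      N U * a i j + ∑ k ∈ U, (∑ T ∈ (U.erase k).powerset,
        N (U.erase k \ T) * ((-1) ^ (T.card + 1) * pathSum a T i k)) * a k j := by
    intro j
    simp_rw [Finset.sum_mul]
    rw [sum_erase_powerset U (fun k T => N (U.erase k \ T) *
      ((-1) ^ (T.card + 1) * pathSum a T i k) * a k j)]
    have h0 : N U * a i j =
        ∑ T ∈ U.powerset, (if T = ∅ then N U * a i j else 0) := by simp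
    rw [h0, ← Finset.sum_add_distrib]
    refine Finset.sum_congr rfl fun T _ => ?_
    rw [pathSum_eq_right, mul_add, mul_add, Finset.mul_sum, Finset.mul_sum]
    congr 1
    · split_ifs with h
      · subst h; simp
      · simp
    · refine Finset.sum_congr rfl fun k hk => ?_
      rw [erase_sdiff_erase_of_mem _ _ hk, Finset.card_erase_add_one hk]
      simp only [mul_assoc]
  have hdiag : ∑ T ∈ U.powerset, N (U \ T) * ((-1) ^ T.card * pathSum a T i i) =
      N Finset.univ := by
    rw [hN.expand hc h2 ha Finset.univ i (Finset.mem_univ i)]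
    rfl
  have htot : ∑ j, (∑ T ∈ U.powerset, N (U \ T) * ((-1) ^ T.card * pathSum a T i j)) * y j =
      N Finset.univ * y i := by
    rw [Finset.sum_eq_single i, hdiag]
    · intro j _ hj
      rw [hN.cofactor_off_diag hc h2 ha U i j (Finset.mem_erase.2 ⟨hj, Finset.mem_univ _⟩),
        zero_mul]
    · simp
  have hlin : ∀ (c : ι → R) (j : ι),
      (N U * a i j + ∑ k ∈ U, c k * a k j) * y j =
        N U * (a i j * y j) + ∑ k ∈ U, c k * (a k j * y j) := by
    intro c j
    rw [add_mul, Finset.sum_mul]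
    simp only [mul_assoc]
  rw [← htot]
  simp_rw [hrow, hlin]
  rw [Finset.sum_add_distrib, Finset.sum_comm]
  simp_rw [← Finset.mul_sum, hy]
  simp
end Family

/-! ### Cycles of a permutation as lists -/

section Orbits
variable {n : ℕ}

/-- The list `[x, σ x, σ² x, …]`, stopped before the first occurrence of `i` and after at most `N`
entries. -/
def orbitList (σ : Equiv.Perm (Fin n)) (i : Fin n) : ℕ → Fin n → List (Fin n)
  | 0, _ => []
  | N + 1, x => if x = i then [] else x :: orbitList σ i N (σ x)

lemma orbitList_succ (σ : Equiv.Perm (Fin n)) (i : Fin n) (N : ℕ) (x : Fin n) :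
    orbitList σ i (N + 1) x = if x = i then [] else x :: orbitList σ i N (σ x) := rfl

lemma takeWhile_eq_orbitList (σ : Equiv.Perm (Fin n)) (i : Fin n) (N : ℕ) (x : Fin n) :
    ((List.range N).map (fun k => (σ ^ k) x)).takeWhile (fun j => decide (j ≠ i)) =
      orbitList σ i N x := by
  induction N generalizing x with
  | zero => rfl
  | succ N ih =>
    rw [List.range_succ_eq_map, List.map_cons, List.map_map, List.takeWhile_cons, orbitList, ← ih]
    by_cases h : x = i
    · simp [h]
    · simp [h, Function.comp_def, pow_succ]

lemma cycleList_eq (σ : Equiv.Perm (Fin n)) (i : Fin n) :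
    cycleList σ i = i :: orbitList σ i n (σ i) := by
  rw [cycleList, ← takeWhile_eq_orbitList]
  simp [pow_succ]

lemma orbitList_succ_of_hit (σ : Equiv.Perm (Fin n)) (i : Fin n) (N : ℕ) (x : Fin n) (t : ℕ)
    (ht : t ≤ N) (hx : (σ ^ t) x = i) : orbitList σ i (N + 1) x = orbitList σ i N x := by
  induction N generalizing x t with
  | zero =>
    obtain rfl : t = 0 := by omega
    simp at hx
    simp [orbitList, hx]
  | succ N ih =>
    rw [orbitList_succ σ i (N + 1), orbitList_succ σ i N x]
    by_cases h : x = i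
    · rw [if_pos h, if_pos h]
    · rw [if_neg h, if_neg h]
      cases t with
      | zero => exact absurd (by simpa using hx) h
      | succ t => rw [ih (σ x) t (by omega) (by simpa [pow_succ] using hx)]

/-- The orbit of `i` returns to `i` within `n` steps, so truncating orbits at length `n` loses
nothing. -/
lemma exists_return (σ : Equiv.Perm (Fin n)) (i : Fin n) :
    ∃ t, t + 1 ≤ n ∧ (σ ^ t) (σ i) = i := by
  have hp : i ∈ Function.periodicPts σ :=
    ⟨orderOf σ, orderOf_pos σ, by
      simp [Function.IsPeriodicPt, Function.IsFixedPt, ← Equiv.Perm.coe_pow, pow_orderOf_eq_one]⟩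
  have hpos := Function.minimalPeriod_pos_of_mem_periodicPts hp
  have hle : Function.minimalPeriod σ i ≤ n := by
    simpa using Function.minimalPeriod_le_card (f := σ) (x := i)
  refine ⟨Function.minimalPeriod σ i - 1, by omega, ?_⟩
  have h := Function.isPeriodicPt_minimalPeriod σ i
  rw [Function.IsPeriodicPt, Function.IsFixedPt, ← Equiv.Perm.coe_pow] at h
  rw [← Equiv.Perm.mul_apply, ← pow_succ, Nat.sub_add_cancel hpos, h]

lemma sameCycle_of_mem_orbitList (σ : Equiv.Perm (Fin n)) (i : Fin n) (N : ℕ) (x y : Fin n)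
    (hy : y ∈ orbitList σ i N x) : σ.SameCycle x y := by
  induction N generalizing x with
  | zero => simp [orbitList] at hy
  | succ N ih =>
    rw [orbitList] at hy
    split_ifs at hy with h
    · simp at hy
    · rcases List.mem_cons.1 hy with rfl | hy
      · exact Equiv.Perm.SameCycle.refl _ _
      · exact (Equiv.Perm.sameCycle_apply_left).1 (ih _ hy)

lemma apply_mem_orbitList (σ : Equiv.Perm (Fin n)) (i : Fin n) (N : ℕ) (x : Fin n) (t : ℕ)
    (ht : t ≤ N) (hx : (σ ^ t) x = i) :
    (x = i ∨ x ∈ orbitList σ i N x) ∧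
      ∀ y ∈ orbitList σ i N x, σ y = i ∨ σ y ∈ orbitList σ i N x := by
  induction N generalizing x t with
  | zero =>
    obtain rfl : t = 0 := by omega
    simp at hx
    simp [orbitList, hx]
  | succ N ih =>
    rw [orbitList]
    by_cases h : x = i
    · simp [h]
    · rw [if_neg h]
      cases t with
      | zero => exact absurd (by simpa using hx) h
      | succ t =>
        obtain ⟨h1, h2⟩ := ih (σ x) t (by omega) (by simpa [pow_succ] using hx)
        refine ⟨by simp, fun y hy => ?_⟩
        rcases List.mem_cons.1 hy with rfl | hy
        · exact h1.imp_right (List.mem_cons_of_mem _)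
        · exact (h2 y hy).imp_right (List.mem_cons_of_mem _)

lemma mem_cycleList (σ : Equiv.Perm (Fin n)) (i x : Fin n) :
    x ∈ cycleList σ i ↔ σ.SameCycle i x := by
  rw [cycleList_eq]
  constructor
  · intro h
    rcases List.mem_cons.1 h with rfl | h
    · exact Equiv.Perm.SameCycle.refl _ _
    · exact (Equiv.Perm.sameCycle_apply_left).1 (sameCycle_of_mem_orbitList _ _ _ _ _ h)
  · intro h
    obtain ⟨t, ht, hti⟩ := exists_return σ i
    obtain ⟨h1, h2⟩ := apply_mem_orbitList σ i n (σ i) t (by omega) hti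
    have hpow : ∀ k : ℕ, (σ ^ k) i ∈ i :: orbitList σ i n (σ i) := by
      intro k
      induction k with
      | zero => simp
      | succ k ih =>
        rw [pow_succ', Equiv.Perm.mul_apply]
        rcases List.mem_cons.1 ih with hk | hk
        · rw [hk]; exact List.mem_cons.2 h1
        · exact List.mem_cons.2 (h2 _ hk)
    obtain ⟨k, _, hk⟩ := h.exists_pow_eq'
    rw [← hk]
    exact hpow k

lemma orbitList_bypass (σ : Equiv.Perm (Fin n)) {i k : Fin n} (hk : σ i = k)
    (N : ℕ) (x : Fin n) (hx : x ≠ i) :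
    orbitList (Equiv.swap i k * σ) k N ((Equiv.swap i k * σ) x) = orbitList σ i N (σ x) := by
  induction N generalizing x with
  | zero => rfl
  | succ N ih =>
    rw [orbitList, orbitList]
    by_cases h : σ x = i
    · simp [h]
    · have hxk : σ x ≠ k := fun h' => hx (σ.injective (h'.trans hk.symm))
      have hs : (Equiv.swap i k * σ) x = σ x := by
        rw [Equiv.Perm.mul_apply, Equiv.swap_apply_of_ne_of_ne h hxk]
      rw [if_neg h, hs, if_neg hxk, ih _ h]

/-- Composing with `swap i (σ i)` removes `i` from its cycle: the cycle of `σ` read from `i` is `i`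
followed by the cycle of the new permutation read from `σ i`. -/
lemma cycleList_bypass (σ : Equiv.Perm (Fin n)) {i k : Fin n} (hk : σ i = k) (hki : k ≠ i) :
    cycleList σ i = i :: cycleList (Equiv.swap i k * σ) k := by
  obtain ⟨t, ht, hti⟩ := exists_return σ i
  obtain ⟨n', rfl⟩ : ∃ n', n = n' + 1 := ⟨n - 1, by omega⟩
  rw [cycleList_eq, cycleList_eq, orbitList_bypass σ hk _ _ hki, hk, orbitList_succ σ i n' k,
    if_neg hki]
  rw [hk] at hti
  cases t with
  | zero => exact absurd (by simpa using hti) hki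
  | succ t =>
    rw [orbitList_succ_of_hit σ i n' (σ k) t (by omega) (by simpa [pow_succ] using hti)]

lemma bypass_apply (σ : Equiv.Perm (Fin n)) {i k : Fin n} (hk : σ i = k) {x : Fin n}
    (hx : ¬ σ.SameCycle i x) : (Equiv.swap i k * σ) x = σ x := by
  rw [Equiv.Perm.mul_apply, Equiv.swap_apply_of_ne_of_ne]
  · intro h
    exact hx (by rw [← Equiv.Perm.sameCycle_apply_right, h])
  · intro h
    exact hx (by rw [← Equiv.Perm.sameCycle_apply_right, h, ← hk]; simp [Equiv.Perm.SameCycle.refl])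

lemma orbitList_bypass_of_not_sameCycle (σ : Equiv.Perm (Fin n)) {i k : Fin n} (hk : σ i = k)
    (j : Fin n) (N : ℕ) (x : Fin n) (hx : ¬ σ.SameCycle i x) :
    orbitList (Equiv.swap i k * σ) j N x = orbitList σ j N x := by
  induction N generalizing x with
  | zero => rfl
  | succ N ih =>
    rw [orbitList, orbitList, bypass_apply σ hk hx, ih _ (by simpa using hx)]

lemma cycleList_bypass_of_notMem (σ : Equiv.Perm (Fin n)) {i k : Fin n} (hk : σ i = k)
    {j : Fin n} (hj : j ∉ cycleList σ i) :
    cycleList (Equiv.swap i k * σ) j = cycleList σ j := by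
  rw [mem_cycleList] at hj
  rw [cycleList_eq, cycleList_eq, bypass_apply σ hk hj,
    orbitList_bypass_of_not_sameCycle σ hk _ _ _ (by simpa using hj)]

lemma cycleList_of_fixed (σ : Equiv.Perm (Fin n)) {i : Fin n} (hi : σ i = i) :
    cycleList σ i = [i] := by
  obtain ⟨n', rfl⟩ : ∃ n', n = n' + 1 := ⟨n - 1, by have := i.2; omega⟩
  rw [cycleList_eq, orbitList, if_pos hi]

end Orbits

/-! ### The Moore determinants of principal submatrices form a Moore family -/

section Chains
variable {n : ℕ} {R : Type*} [Ring R]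

/-- The product of the entries of `a` along the path that visits the given list and ends at `x`. -/
def chainTo (a : Fin n → Fin n → R) (x : Fin n) : List (Fin n) → R
  | [] => 1
  | [i] => a i x
  | i :: j :: l => a i j * chainTo a x (j :: l)

lemma chainTo_orbitList (a : Fin n → Fin n → R) (σ : Equiv.Perm (Fin n)) (i : Fin n) (N : ℕ)
    (x : Fin n) (t : ℕ) (ht : t ≤ N) (hx : (σ ^ t) (σ x) = i) :
    chainTo a i (x :: orbitList σ i N (σ x)) =
      ((x :: orbitList σ i N (σ x)).map (fun l => a l (σ l))).prod := by
  induction N generalizing x t with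
  | zero =>
    obtain rfl : t = 0 := by omega
    simp at hx
    simp [orbitList, hx, chainTo]
  | succ N ih =>
    rw [orbitList]
    by_cases h : σ x = i
    · simp [h, chainTo]
    · rw [if_neg h]
      cases t with
      | zero => exact absurd (by simpa using hx) h
      | succ t =>
        rw [chainTo, ih (σ x) t (by omega) (by simpa [pow_succ] using hx), List.map_cons,
          List.map_cons, List.map_cons, List.prod_cons, List.prod_cons, List.prod_cons]

lemma chainTo_cycleList (a : Fin n → Fin n → R) (σ : Equiv.Perm (Fin n)) (i : Fin n) :
    chainTo a i (cycleList σ i) = ((cycleList σ i).map (fun l => a l (σ l))).prod := by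
  obtain ⟨t, ht, hti⟩ := exists_return σ i
  rw [cycleList_eq]
  exact chainTo_orbitList a σ i n i t (by omega) hti

/-- The product of the cycle products of `σ` over the cycles whose least element `j` satisfies `p`,
each read from `j` and ordered by decreasing `j`. -/
def leaderProd (a : Fin n → Fin n → R) (σ : Equiv.Perm (Fin n)) (p : Fin n → Prop)
    [DecidablePred p] : R :=
  ((((List.finRange n).filter
    (fun j => decide (p j ∧ ∀ l ∈ cycleList σ j, j ≤ l))).reverse).map
      (fun j => chainTo a j (cycleList σ j))).prod

lemma leaderProd_congr (a : Fin n → Fin n → R) {σ τ : Equiv.Perm (Fin n)} {p q : Fin n → Prop}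
    [DecidablePred p] [DecidablePred q] (hpq : ∀ j, p j ↔ q j)
    (hc : ∀ j, p j → cycleList σ j = cycleList τ j) :
    leaderProd a σ p = leaderProd a τ q := by
  have hfil : (List.finRange n).filter (fun j => decide (p j ∧ ∀ l ∈ cycleList σ j, j ≤ l)) =
      (List.finRange n).filter (fun j => decide (q j ∧ ∀ l ∈ cycleList τ j, j ≤ l)) := by
    refine List.filter_congr fun j _ => ?_
    rw [decide_eq_decide, ← hpq j]
    refine and_congr_right fun hj => ?_
    rw [hc j hj]
  rw [leaderProd, leaderProd, ← hfil]
  congr 1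
  refine List.map_congr_left fun j hj => ?_
  rw [List.mem_reverse, List.mem_filter, decide_eq_true_eq] at hj
  rw [hc j hj.2.1]

/-- The permutations that move only elements of `S`. -/
def permsOn (S : Finset (Fin n)) : Finset (Equiv.Perm (Fin n)) :=
  Finset.univ.filter fun σ => ∀ x, x ∉ S → σ x = x

lemma mem_permsOn {S : Finset (Fin n)} {σ : Equiv.Perm (Fin n)} :
    σ ∈ permsOn S ↔ ∀ x, x ∉ S → σ x = x := by simp [permsOn]

/-- The Moore determinant of the principal submatrix of `a` with index set `S`. -/
def mooreSub (a : Fin n → Fin n → R) (S : Finset (Fin n)) : R :=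
  ∑ σ ∈ permsOn S, ((Equiv.Perm.sign σ : ℤ) : R) * leaderProd a σ (· ∈ S)

lemma Mdet_eq_mooreSub (A : Matrix (Fin n) (Fin n) R) :
    Mdet A = mooreSub (fun i j => A i j) Finset.univ := by
  have hu : permsOn (Finset.univ : Finset (Fin n)) = Finset.univ := by
    ext σ; simp [mem_permsOn]
  rw [Mdet, mooreSub, hu]
  refine Finset.sum_congr rfl fun σ _ => ?_
  congr 1
  rw [mooreOrder, mooreLeaders, leaderProd, List.map_flatten, List.prod_flatten, List.map_map,
    List.map_map]
  simp only [Finset.mem_univ, true_and, chainTo_cycleList]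
  congr 2
  congr 1
  refine List.filter_congr fun j _ => ?_
  rw [Bool.eq_iff_iff]
  simp

/-- The bijection `σ ↔ (σ i, swap i (σ i) * σ)` between the permutations of `insert i S` and the
pairs of an element of `insert i S` and a permutation of `S`. -/
lemma permsOn_insert_sum {M : Type*} [AddCommMonoid M] (S : Finset (Fin n)) {i : Fin n}
    (hi : i ∉ S) (f : Equiv.Perm (Fin n) → M) :
    ∑ σ ∈ permsOn (insert i S), f σ =
      ∑ k ∈ insert i S, ∑ τ ∈ permsOn S, f (Equiv.swap i k * τ) := by
  rw [Finset.sum_sigma']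
  symm
  refine Finset.sum_bij' (fun p _ => Equiv.swap i p.1 * p.2)
    (fun σ _ => ⟨σ i, Equiv.swap i (σ i) * σ⟩) ?_ ?_ ?_ ?_ ?_
  · rintro ⟨k, τ⟩ h
    simp only [Finset.mem_sigma, mem_permsOn] at h ⊢
    intro x hx
    rw [Finset.mem_insert, not_or] at hx
    rw [Equiv.Perm.mul_apply, h.2 x hx.2, Equiv.swap_apply_of_ne_of_ne hx.1]
    rintro rfl
    rcases Finset.mem_insert.1 h.1 with h' | h'
    · exact hx.1 h'
    · exact hx.2 h'
  · intro σ h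
    simp only [Finset.mem_sigma, mem_permsOn] at h ⊢
    constructor
    · by_contra hn
      have := σ.injective (h _ hn)
      rw [this] at hn
      exact hn (Finset.mem_insert_self _ _)
    · intro x hx
      by_cases hxi : x = i
      · subst hxi; simp
      · have hσx : σ x = x := h x (by simp [hxi, hx])
        rw [Equiv.Perm.mul_apply, hσx, Equiv.swap_apply_of_ne_of_ne hxi]
        intro h'
        exact hxi (σ.injective (hσx.trans h'))
  · rintro ⟨k, τ⟩ h
    simp only [Finset.mem_sigma, mem_permsOn] at h
    have hτ := h.2 i hi
    simp [Equiv.Perm.mul_apply, hτ, ← mul_assoc]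
  · intro σ h
    simp [← mul_assoc]
  · intros; rfl

/-- The sum over all permutations of `insert i S`, with the cycle through `i` opened into a path from
`i` to `x` and put last, grouped by the vertex set `{i} ∪ T` of that cycle. The factor `z` collects
the edges already removed while the induction bypasses the successive vertices of the cycle. -/
lemma sum_permsOn_insert (a : Fin n → Fin n → R) (S : Finset (Fin n)) {i : Fin n} (hi : i ∉ S)
    (x : Fin n) (z : R) :
    ∑ σ ∈ permsOn (insert i S), ((Equiv.Perm.sign σ : ℤ) : R) *
        (leaderProd a σ (fun j => j ∈ S ∧ j ∉ cycleList σ i) *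
          (z * chainTo a x (cycleList σ i))) =
      ∑ T ∈ S.powerset, mooreSub a (S \ T) * (z * ((-1) ^ T.card * pathSum a T i x)) := by
  induction hc : S.card using Nat.strong_induction_on generalizing S i z with
  | _ c ih =>
    subst hc
    rw [permsOn_insert_sum S hi, Finset.sum_insert hi]
    have hfix : ∑ τ ∈ permsOn S, ((Equiv.Perm.sign (Equiv.swap i i * τ) : ℤ) : R) *
        (leaderProd a (Equiv.swap i i * τ)
          (fun j => j ∈ S ∧ j ∉ cycleList (Equiv.swap i i * τ) i) *
          (z * chainTo a x (cycleList (Equiv.swap i i * τ) i))) =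
        mooreSub a S * (z * a i x) := by
      rw [mooreSub, Finset.sum_mul]
      refine Finset.sum_congr rfl fun τ hτ => ?_
      have hτi : τ i = i := mem_permsOn.1 hτ i hi
      rw [Equiv.swap_self, ← Equiv.Perm.one_def, one_mul, mul_assoc]
      congr 1
      rw [cycleList_of_fixed τ hτi, chainTo]
      congr 1
      refine leaderProd_congr a (fun j => ?_) (fun _ _ => rfl)
      simp only [List.mem_singleton, and_iff_left_iff_imp]
      rintro h rfl
      exact hi h
    have hmove : ∀ k ∈ S,
        ∑ τ ∈ permsOn S, ((Equiv.Perm.sign (Equiv.swap i k * τ) : ℤ) : R) *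
          (leaderProd a (Equiv.swap i k * τ)
            (fun j => j ∈ S ∧ j ∉ cycleList (Equiv.swap i k * τ) i) *
            (z * chainTo a x (cycleList (Equiv.swap i k * τ) i))) =
        ∑ T ∈ (S.erase k).powerset, mooreSub a (S.erase k \ T) *
          (z * ((-1) ^ (T.card + 1) * (a i k * pathSum a T k x))) := by
      intro k hk
      have hki : k ≠ i := fun h => hi (h ▸ hk)
      have hih := ih _ (Finset.card_erase_lt_of_mem hk) (S.erase k) (i := k)
        (Finset.notMem_erase _ _) (z * a i k) rfl
      rw [Finset.insert_erase hk] at hih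
      have hR : ∀ T ∈ (S.erase k).powerset, mooreSub a (S.erase k \ T) *
          (z * ((-1) ^ (T.card + 1) * (a i k * pathSum a T k x))) =
          - (mooreSub a (S.erase k \ T) * (z * a i k * ((-1) ^ T.card * pathSum a T k x))) := by
        intro T _
        rw [pow_succ, mul_assoc z, ← mul_assoc (a i k), ← neg_one_pow_comm]
        noncomm_ring
      rw [Finset.sum_congr rfl hR, Finset.sum_neg_distrib, ← hih, ← Finset.sum_neg_distrib]
      refine Finset.sum_congr rfl fun τ hτ => ?_
      have hτi : τ i = i := mem_permsOn.1 hτ i hi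
      have hσ : (Equiv.swap i k * τ) i = k := by simp [hτi]
      have hback : Equiv.swap i k * (Equiv.swap i k * τ) = τ := by simp [← mul_assoc]
      have hcyc := cycleList_bypass (Equiv.swap i k * τ) hσ hki
      rw [hback] at hcyc
      have hlead : leaderProd a (Equiv.swap i k * τ)
            (fun j => j ∈ S ∧ j ∉ cycleList (Equiv.swap i k * τ) i) =
          leaderProd a τ (fun j => j ∈ S.erase k ∧ j ∉ cycleList τ k) := by
        refine leaderProd_congr a (fun j => ?_) (fun j hj => ?_)
        · rw [hcyc, List.mem_cons, not_or, Finset.mem_erase]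
          constructor
          · rintro ⟨h1, _, h2⟩
            refine ⟨⟨?_, h1⟩, h2⟩
            rintro rfl
            exact h2 (by simp [cycleList])
          · rintro ⟨⟨_, h1⟩, h2⟩
            exact ⟨h1, fun h => hi (h ▸ h1), h2⟩
        · have := cycleList_bypass_of_notMem (Equiv.swap i k * τ) hσ hj.2
          rw [hback] at this
          exact this.symm
      have hchain : chainTo a x (cycleList (Equiv.swap i k * τ) i) =
          a i k * chainTo a x (cycleList τ k) := by
        rw [hcyc, cycleList, chainTo]
      rw [hlead, hchain, Equiv.Perm.sign_mul, Equiv.Perm.sign_swap hki.symm]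
      simp only [neg_mul, one_mul, Units.val_neg, Int.cast_neg, mul_assoc]
    rw [hfix, Finset.sum_congr rfl hmove,
      sum_erase_powerset S (fun k T => mooreSub a (S.erase k \ T) *
          (z * ((-1) ^ (T.card + 1) * (a i k * pathSum a T k x))))]
    have h0 : mooreSub a S * (z * a i x) =
        ∑ T ∈ S.powerset, (if T = ∅ then mooreSub a S * (z * a i x) else 0) := by simp
    rw [h0, ← Finset.sum_add_distrib]
    refine Finset.sum_congr rfl fun T _ => ?_
    rw [pathSum_eq, mul_add, mul_add, mul_add, Finset.mul_sum, Finset.mul_sum, Finset.mul_sum]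
    congr 1
    · split_ifs with h
      · subst h; simp
      · simp
    · refine Finset.sum_congr rfl fun k hk => ?_
      rw [erase_sdiff_erase_of_mem _ _ hk, Finset.card_erase_add_one hk]

lemma filter_eq_cons {α : Type*} [LinearOrder α] (l : List α) (hl : l.Pairwise (· < ·))
    (p : α → Prop) [DecidablePred p] {m : α} (hm : m ∈ l) (hp : p m)
    (hmin : ∀ x, p x → m ≤ x) :
    l.filter (fun x => decide (p x)) = m :: l.filter (fun x => decide (p x ∧ x ≠ m)) := by
  induction l with
  | nil => simp at hm
  | cons b l ih =>
    rw [List.pairwise_cons] at hl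
    by_cases hb : b = m
    · subst hb
      rw [List.filter_cons_of_pos (by simpa using hp), List.filter_cons_of_neg (by simp)]
      congr 1
      refine List.filter_congr fun x hx => ?_
      rw [decide_eq_decide]
      exact ⟨fun h => ⟨h, (hl.1 x hx).ne'⟩, fun h => h.1⟩
    · have hml : m ∈ l := (List.mem_cons.1 hm).resolve_left (Ne.symm hb)
      have hpb : ¬ p b := fun h => absurd (hmin b h) (not_le.2 (hl.1 m hml))
      rw [List.filter_cons_of_neg (by simpa using hpb),
        List.filter_cons_of_neg (by simp [hpb]), ih hl.2 hml]

lemma mem_of_sameCycle {S : Finset (Fin n)} {σ : Equiv.Perm (Fin n)} (hσ : σ ∈ permsOn S)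
    {x y : Fin n} (hx : x ∈ S) (h : σ.SameCycle x y) : y ∈ S := by
  by_contra hy
  have hfix : σ y = y := mem_permsOn.1 hσ y hy
  have := (Equiv.Perm.SameCycle.eq_of_right h hfix)
  exact hy (this ▸ hx)

/-- The least index of `S` leads its cycle and is the smallest of all leaders, so its cycle is the
last factor, and `sum_permsOn_insert` with `x = m` applies. -/
lemma isMooreFamily_mooreSub (a : Fin n → Fin n → R) : IsMooreFamily a (mooreSub a) where
  empty := by
    have h1 : permsOn (∅ : Finset (Fin n)) = {1} := by
      ext σ
      simp [mem_permsOn, Equiv.ext_iff]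
    rw [mooreSub, h1]
    simp [leaderProd]
  expand_min S m hm hmin := by
    have h := sum_permsOn_insert a (S.erase m) (Finset.notMem_erase m S) m 1
    rw [Finset.insert_erase hm] at h
    simp only [one_mul] at h
    unfold cycSum
    rw [← h, mooreSub]
    refine Finset.sum_congr rfl fun σ hσ => ?_
    congr 1
    rw [leaderProd, leaderProd, filter_eq_cons (List.finRange n) (List.pairwise_lt_finRange n)
      (fun j => j ∈ S ∧ ∀ l ∈ cycleList σ j, j ≤ l) (List.mem_finRange m) ⟨hm, ?_⟩
      (fun x hx => hmin x hx.1), List.reverse_cons, List.map_append, List.prod_append]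
    · simp only [List.map_cons, List.map_nil, List.prod_cons, List.prod_nil, mul_one]
      congr 4
      refine List.filter_congr fun j _ => ?_
      rw [decide_eq_decide, Finset.mem_erase, mem_cycleList]
      constructor
      · rintro ⟨⟨h1, h2⟩, h3⟩
        refine ⟨⟨⟨h3, h1⟩, fun hs => h3 (le_antisymm (h2 m ?_) (hmin j h1))⟩, h2⟩
        rw [mem_cycleList]
        exact hs.symm
      · rintro ⟨⟨⟨h3, h1⟩, _⟩, h2⟩
        exact ⟨⟨h1, h2⟩, h3⟩
    · intro l hl
      rw [mem_cycleList] at hl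
      exact hmin l (mem_of_sameCycle hσ hm hl)

end Chains

/-! ### Homogeneous forms in commuting variables -/

section Forms
variable {ι D R : Type*} [Fintype ι] [CommRing D] [Ring R] [Algebra D R]

/-- `F` is a homogeneous form of degree `d` in the commuting variables `x i` with coefficients in `R`.
The coefficients are indexed by words of length `d`, and hence are not unique. -/
def IsForm (d : ℕ) (F : (ι → D) → R) : Prop :=
  ∃ c : (Fin d → ι) → R, ∀ x, F x = ∑ f, (∏ j, x (f j)) • c f

lemma IsForm.const (r : R) : IsForm 0 (fun _ : ι → D => r) :=
  ⟨fun _ => r, fun x => by simp⟩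

lemma IsForm.zero (d : ℕ) : IsForm d (fun _ : ι → D => (0 : R)) :=
  ⟨fun _ => 0, fun x => by simp⟩

lemma IsForm.add {d : ℕ} {F G : (ι → D) → R} (hF : IsForm d F) (hG : IsForm d G) :
    IsForm d (fun x => F x + G x) := by
  obtain ⟨c, hc⟩ := hF
  obtain ⟨e, he⟩ := hG
  exact ⟨fun f => c f + e f, fun x => by simp [hc, he, Finset.sum_add_distrib]⟩

lemma IsForm.sum {d : ℕ} {κ : Type*} (s : Finset κ) {F : κ → (ι → D) → R}
    (hF : ∀ k ∈ s, IsForm d (F k)) : IsForm d (fun x => ∑ k ∈ s, F k x) := by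
  classical
  induction s using Finset.induction_on with
  | empty => simpa using IsForm.zero d
  | insert k s hk ih =>
    simp only [Finset.sum_insert hk]
    exact (hF k (Finset.mem_insert_self _ _)).add
      (ih fun l hl => hF l (Finset.mem_insert_of_mem hl))

lemma IsForm.mul {d e : ℕ} {F G : (ι → D) → R} (hF : IsForm d F) (hG : IsForm e G) :
    IsForm (d + e) (fun x => F x * G x) := by
  obtain ⟨c, hc⟩ := hF
  obtain ⟨b, hb⟩ := hG
  refine ⟨fun f => c (fun j => f (Fin.castAdd e j)) * b (fun j => f (Fin.natAdd d j)),
    fun x => ?_⟩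
  simp only [hc, hb]
  rw [Finset.sum_mul_sum, ← Finset.sum_product', Finset.univ_product_univ]
  refine Fintype.sum_equiv (Fin.appendEquiv d e) _ _ ?_
  rintro ⟨f, g⟩
  simp [Fin.appendEquiv, Fin.prod_univ_add]
  rw [smul_smul, mul_comm]

lemma IsForm.linear (g : ι → R) : IsForm 1 (fun x : ι → D => ∑ k, x k • g k) :=
  ⟨fun f => g (f 0), fun x => by
    refine (Fintype.sum_equiv (Equiv.funUnique (Fin 1) ι) _ _ ?_).symm
    intro f
    simp⟩

/-- If a form vanishes whenever some variable does, the monomials that miss a variable contribute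
nothing. For each proper subset `T` of the variables, setting the others to zero shows by induction
that the monomials with variable set exactly `T` sum to zero. -/
lemma form_eq_sum_surjective [DecidableEq ι] {d : ℕ} {F : (ι → D) → R} {c : (Fin d → ι) → R}
    (hc : ∀ x, F x = ∑ f, (∏ j, x (f j)) • c f)
    (h0 : ∀ x i, x i = 0 → F x = 0) (x : ι → D) :
    F x = ∑ f : Fin d → ι with Finset.univ.image f = Finset.univ, (∏ j, x (f j)) • c f := by
  set g : (Fin d → ι) → R := fun f => (∏ j, x (f j)) • c f with hg
  have hvan : ∀ T : Finset ι, T ≠ Finset.univ →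
      ∑ f with Finset.univ.image f = T, g f = 0 := by
    intro T
    induction T using Finset.strongInduction with
    | H T ih =>
      intro hT
      obtain ⟨i, hi⟩ : ∃ i, i ∉ T := by
        by_contra! h
        exact hT (Finset.eq_univ_of_forall h)
      have hz := h0 (fun k => if k ∈ T then x k else 0) i (by simp [hi])
      rw [hc] at hz
      have hterm : ∀ f : Fin d → ι,
          (∏ j, (if f j ∈ T then x (f j) else 0)) • c f =
            if Finset.univ.image f ⊆ T then g f else 0 := by
        intro f
        split_ifs with h
        · have : ∀ j, f j ∈ T := fun j => h (Finset.mem_image_of_mem f (Finset.mem_univ j))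
          simp [this, hg]
        · rw [Finset.image_subset_iff] at h
          push Not at h
          obtain ⟨j, _, hj⟩ := h
          rw [Finset.prod_eq_zero (Finset.mem_univ j) (if_neg hj), zero_smul]
      rw [Finset.sum_congr rfl fun f _ => hterm f, ← Finset.sum_filter,
        ← Finset.sum_fiberwise_of_maps_to (t := T.powerset)
          (g := fun f : Fin d → ι => Finset.univ.image f)
          (fun f hf => by simpa using hf),
        Finset.sum_eq_single T] at hz
      · rw [← hz, Finset.filter_filter]
        refine Finset.sum_congr ?_ fun _ _ => rfl
        ext f
        simp only [Finset.mem_filter, Finset.mem_univ, true_and]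
        exact ⟨fun h => ⟨h.subset, h⟩, fun h => h.2⟩
      · intro T' hT' hne
        rw [Finset.mem_powerset] at hT'
        have hss : T' ⊂ T := lt_of_le_of_ne hT' hne
        rw [← ih T' hss (fun h => hT (Finset.univ_subset_iff.1 (h ▸ hT'))),
          Finset.filter_filter]
        refine Finset.sum_congr ?_ fun _ _ => rfl
        ext f
        simp only [Finset.mem_filter, Finset.mem_univ, true_and]
        exact ⟨fun h => h.2, fun h => ⟨h ▸ hT', h⟩⟩
      · simp
  have hsum : ∑ f, g f = ∑ f with Finset.univ.image f = Finset.univ, g f := by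
    rw [← Finset.sum_fiberwise_of_maps_to (t := (Finset.univ : Finset (Finset ι)))
      (g := fun f : Fin d → ι => Finset.univ.image f)
      (fun f _ => Finset.mem_univ _), Finset.sum_eq_single Finset.univ]
    · intro T _ hT
      exact hvan T hT
    · simp
  rw [hc]
  exact hsum

/-- A form of degree equal to the number of variables that vanishes whenever some variable does is a
multiple of the product of all variables. -/
lemma IsForm.eq_prod_smul [DecidableEq ι] {F : (ι → D) → R} (hF : IsForm (Fintype.card ι) F)
    (h0 : ∀ x i, x i = 0 → F x = 0) (x : ι → D) : F x = (∏ i, x i) • F 1 := by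
  obtain ⟨c, hc⟩ := hF
  have hsurj : ∀ x : ι → D, F x =
      (∏ i, x i) • ∑ f : Fin (Fintype.card ι) → ι with Finset.univ.image f = Finset.univ, c f := by
    intro x
    rw [form_eq_sum_surjective hc h0 x, Finset.smul_sum]
    refine Finset.sum_congr rfl fun f hf => ?_
    rw [Finset.mem_filter] at hf
    have hs : Function.Surjective f := by
      intro i
      have : i ∈ Finset.univ.image f := hf.2 ▸ Finset.mem_univ i
      simpa using this
    have hb : Function.Bijective f := by
      rw [Fintype.bijective_iff_surjective_and_card]
      exact ⟨hs, by simp⟩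
    rw [hb.prod_comp x]
  rw [hsurj x, hsurj 1]
  simp


lemma isForm_pathSum {κ : Type*} [DecidableEq κ] {a : (ι → D) → κ → κ → R}
    (ha : ∀ i j, IsForm 1 (fun x => a x i j)) (T : Finset κ) (i y : κ) :
    IsForm (T.card + 1) (fun x => pathSum (a x) T i y) := by
  induction hc : T.card using Nat.strong_induction_on generalizing T i with
  | _ c ih =>
    subst hc
    have e : (fun x => pathSum (a x) T i y) = fun x =>
        (if T = ∅ then a x i y else 0) + ∑ k ∈ T, a x i k * pathSum (a x) (T.erase k) k y :=
      funext fun x => pathSum_eq _ _ _ _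
    rw [e]
    refine IsForm.add ?_ (IsForm.sum _ fun k hk => ?_)
    · split_ifs with h
      · subst h; simpa using ha i y
      · exact IsForm.zero _
    · have h1 := (ha i k).mul (ih _ (Finset.card_erase_lt_of_mem hk) (T.erase k) k rfl)
      rwa [Finset.card_erase_add_one hk, add_comm 1] at h1

lemma isForm_mooreFamily {κ : Type*} [LinearOrder κ] {a : (ι → D) → κ → κ → R}
    (ha : ∀ i j, IsForm 1 (fun x => a x i j)) {N : (ι → D) → Finset κ → R}
    (hN : ∀ x, IsMooreFamily (a x) (N x)) (S : Finset κ) :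
    IsForm S.card (fun x => N x S) := by
  induction hc : S.card using Nat.strong_induction_on generalizing S with
  | _ c ih =>
    subst hc
    obtain rfl | hS := S.eq_empty_or_nonempty
    · simp only [(hN _).empty]
      exact IsForm.const 1
    have hm := S.min'_mem hS
    simp only [fun x => (hN x).expand_min S _ hm (fun y hy => Finset.min'_le _ _ hy)]
    refine IsForm.sum _ fun T hT => ?_
    rw [Finset.mem_powerset] at hT
    have hlt : (S.erase (S.min' hS) \ T).card < S.card :=
      lt_of_le_of_lt (Finset.card_le_card Finset.sdiff_subset) (Finset.card_erase_lt_of_mem hm)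
    have h1 := (ih _ hlt _ rfl).mul ((IsForm.const ((-1 : R) ^ T.card)).mul
      (isForm_pathSum ha T (S.min' hS) (S.min' hS)))
    have hcard : (S.erase (S.min' hS) \ T).card + (0 + (T.card + 1)) = S.card := by
      have := Finset.card_sdiff_add_card_eq_card hT
      have := Finset.card_erase_add_one hm
      omega
    rwa [hcard] at h1

/-- The Moore determinant of the identity matrix is `1`. -/
lemma IsMooreFamily.eq_one {κ : Type*} [LinearOrder κ] {N : Finset κ → R}
    (hN : IsMooreFamily (fun i j : κ => if i = j then (1 : R) else 0) N) (S : Finset κ) :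
    N S = 1 := by
  induction hc : S.card using Nat.strong_induction_on generalizing S with
  | _ c ih =>
    subst hc
    obtain rfl | hS := S.eq_empty_or_nonempty
    · exact hN.empty
    have hm := S.min'_mem hS
    rw [hN.expand_min S _ hm (fun y hy => Finset.min'_le _ _ hy), Finset.sum_eq_single ∅]
    · simp [cycSum, pathSum_empty, ih _ (Finset.card_erase_lt_of_mem hm) _ rfl]
    · intro T hT hne
      rw [Finset.mem_powerset, Finset.subset_erase] at hT
      rw [cycSum, pathSum_eq, if_neg hne, Finset.sum_eq_zero]
      · simp
      · intro k hk
        have hne' : S.min' hS ≠ k := fun h => hT.2 (h ▸ hk)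
        simp [hne']
    · simp

end Forms

/-! ### The Moore determinant of a unitarily diagonalized matrix -/

section Diagonalization
variable {n : ℕ} {D R : Type*} [CommRing D] [Ring R] [Algebra D R] [StarRing R]

/-- For a unitary `U` over a ring whose self-adjoint elements are central and in which `2` is not a
zero divisor, `Mdet (U* diag(x) U) = ∏ x i`. If `x l = 0`, column `l` of `U*` lies in the kernel of
the matrix, and it is unimodular, so the determinant vanishes; `IsForm.eq_prod_smul` then reduces
the claim to `x = 1`. -/
theorem Mdet_conj_diagonal (hc : ∀ x : R, star x = x → ∀ y, x * y = y * x)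
    (h2 : ∀ x : R, x + x = 0 → x = 0)
    (hD : ∀ d : D, star (algebraMap D R d) = algebraMap D R d)
    (U : Matrix (Fin n) (Fin n) R) (hU : Uᴴ * U = 1) (hU' : U * Uᴴ = 1) (x : Fin n → D) :
    Mdet (Uᴴ * Matrix.diagonal (fun i => algebraMap D R (x i)) * U) =
      algebraMap D R (∏ i, x i) := by
  set a : (Fin n → D) → Fin n → Fin n → R := fun x i j =>
    (Uᴴ * Matrix.diagonal (fun i => algebraMap D R (x i)) * U) i j with ha
  have hN : ∀ x, IsMooreFamily (a x) (mooreSub (a x)) := fun x => isMooreFamily_mooreSub _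
  have haform : ∀ i j, IsForm 1 (fun x => a x i j) := by
    intro i j
    convert IsForm.linear (D := D) (fun k => Uᴴ i k * U k j) using 2 with x
    simp only [ha, Matrix.mul_apply (M := Uᴴ * _), Matrix.mul_diagonal]
    refine Finset.sum_congr rfl fun k _ => ?_
    rw [← Algebra.commutes, mul_assoc, Algebra.smul_def]
  have hform : IsForm (Fintype.card (Fin n)) (fun x => mooreSub (a x) Finset.univ) := by
    simpa using isForm_mooreFamily haform hN Finset.univ
  have hstar : ∀ x i j, star (a x i j) = a x j i := by
    intro x i j
    have : (Uᴴ * Matrix.diagonal (fun i => algebraMap D R (x i)) * U)ᴴ =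
        Uᴴ * Matrix.diagonal (fun i => algebraMap D R (x i)) * U := by
      rw [Matrix.conjTranspose_mul, Matrix.conjTranspose_mul, Matrix.conjTranspose_conjTranspose,
        Matrix.diagonal_conjTranspose, mul_assoc]
      congr 3
      ext i
      simp [hD]
    exact congrFun (congrFun this j) i
  have hvan : ∀ (x : Fin n → D) (l : Fin n), x l = 0 → mooreSub (a x) Finset.univ = 0 := by
    intro x l hl
    have hker : ∀ k, ∑ j, a x k j * Uᴴ j l = 0 := by
      intro k
      have h : Uᴴ * Matrix.diagonal (fun i => algebraMap D R (x i)) * U * Uᴴ =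
          Uᴴ * Matrix.diagonal (fun i => algebraMap D R (x i)) := by
        rw [mul_assoc, hU', mul_one]
      have h' := congrFun (congrFun h k) l
      rw [Matrix.mul_apply, Matrix.mul_diagonal, hl] at h'
      simpa using h'
    have hz := (hN x).mul_eq_zero_of_ker hc h2 (hstar x) (fun j => Uᴴ j l) hker
    have h1 : ∑ i, U l i * Uᴴ i l = 1 := by
      rw [← Matrix.mul_apply, hU', Matrix.one_apply_eq]
    calc mooreSub (a x) Finset.univ = mooreSub (a x) Finset.univ * ∑ i, U l i * Uᴴ i l := by
          rw [h1, mul_one]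
      _ = ∑ i, U l i * (mooreSub (a x) Finset.univ * Uᴴ i l) := by
          rw [Finset.mul_sum]
          refine Finset.sum_congr rfl fun i _ => ?_
          rw [← mul_assoc, (hN x).comm hc (hstar x), mul_assoc]
      _ = 0 := Finset.sum_eq_zero fun i _ => by rw [hz i, mul_zero]
  have hone : mooreSub (a 1) Finset.univ = 1 := by
    have h1 : a 1 = fun i j => if i = j then (1 : R) else 0 := by
      funext i j
      simp only [ha, Pi.one_apply, map_one, Matrix.diagonal_one, mul_one, hU, Matrix.one_apply]
    have := hN 1
    rw [h1] at this ⊢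
    exact this.eq_one _
  rw [Mdet_eq_mooreSub]
  have := hform.eq_prod_smul hvan x
  rw [hone, Algebra.smul_def, mul_one] at this
  exact this

end Diagonalization

/-! ### Dual quaternions and dual numbers -/

section DualQuaternions

/-- Conjugation makes the dual quaternions a star ring. This is not a global instance; it extends the
given `Star` structure. -/
@[reducible] def dqStarRing : StarRing DualQuaternion where
  star_involutive q := by
    apply TrivSqZeroExt.ext
    · exact star_star q.fst
    · exact star_star q.snd
  star_mul p q := by
    apply TrivSqZeroExt.ext
    · exact star_mul p.fst q.fst
    · change star (p.fst * q.snd + p.snd * q.fst) =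
        star q.fst * star p.snd + star q.snd * star p.fst
      rw [star_add, star_mul, star_mul, add_comm]
  star_add p q := by
    apply TrivSqZeroExt.ext
    · exact star_add p.fst q.fst
    · exact star_add p.snd q.snd

lemma dq_eq_toDQ_of_star_eq (q : DualQuaternion) (hq : star q = q) : ∃ d, q = toDQ d := by
  have h1 : star q.fst = q.fst := congrArg TrivSqZeroExt.fst hq
  have h2 : star q.snd = q.snd := congrArg TrivSqZeroExt.snd hq
  rw [Quaternion.star_eq_self] at h1 h2
  exact ⟨(q.fst.re, q.snd.re), TrivSqZeroExt.ext h1 h2⟩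

/-- The embedding of the dual numbers into the dual quaternions as a ring homomorphism. -/
def toDQHom : DualNumber ℝ →+* DualQuaternion where
  toFun := toDQ
  map_one' := by
    apply TrivSqZeroExt.ext
    · exact Quaternion.coe_one
    · exact Quaternion.coe_zero
  map_zero' := by
    apply TrivSqZeroExt.ext
    · exact Quaternion.coe_zero
    · exact Quaternion.coe_zero
  map_mul' p q := by
    apply TrivSqZeroExt.ext
    · exact Quaternion.coe_mul _ _
    · change ((p.fst * q.snd + p.snd * q.fst : ℝ) : ℍ[ℝ]) = p.fst * q.snd + p.snd * q.fst
      push_cast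
      rfl
  map_add' p q := by
    apply TrivSqZeroExt.ext
    · exact Quaternion.coe_add _ _
    · exact Quaternion.coe_add _ _

lemma toDQ_commutes (d : DualNumber ℝ) (q : DualQuaternion) : toDQ d * q = q * toDQ d := by
  apply TrivSqZeroExt.ext
  · exact Quaternion.coe_commutes _ _
  · change (d.fst : ℍ[ℝ]) * q.snd + d.snd * q.fst = q.fst * d.snd + q.snd * d.fst
    rw [Quaternion.coe_commutes, Quaternion.coe_commutes, add_comm]

lemma toDQ_eq_zero {d : DualNumber ℝ} : toDQ d = 0 ↔ d = 0 := by
  constructor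
  · intro h
    have h1 : (d.fst : ℍ[ℝ]) = 0 := congrArg TrivSqZeroExt.fst h
    have h2 : (d.snd : ℍ[ℝ]) = 0 := congrArg TrivSqZeroExt.snd h
    exact TrivSqZeroExt.ext (Quaternion.coe_injective h1) (Quaternion.coe_injective h2)
  · rintro rfl
    exact toDQHom.map_zero

lemma star_toDQ (d : DualNumber ℝ) : star (toDQ d) = toDQ d := by
  apply TrivSqZeroExt.ext
  · exact Quaternion.star_coe _
  · exact Quaternion.star_coe _

/-- A dual number with nonzero standard part is a unit, and a product of two infinitesimals is
zero. -/
lemma dualNumber_prod_eq_zero_iff {n : ℕ} (lam : Fin n → DualNumber ℝ) :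
    ∏ i, lam i = 0 ↔
      (∃ i, lam i = 0) ∨ ∃ i j, i ≠ j ∧ (lam i).fst = 0 ∧ (lam j).fst = 0 := by
  constructor
  · intro h
    by_contra! hcon
    obtain ⟨h0, h2⟩ := hcon
    have hunit : ∀ i, (lam i).fst ≠ 0 → IsUnit (lam i) := fun i hi =>
      TrivSqZeroExt.isUnit_iff_isUnit_fst.2 (isUnit_iff_ne_zero.2 hi)
    by_cases hex : ∃ i, (lam i).fst = 0
    · obtain ⟨i, hi⟩ := hex
      rw [← Finset.mul_prod_erase _ _ (Finset.mem_univ i)] at h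
      have hu : IsUnit (∏ j ∈ Finset.univ.erase i, lam j) :=
        IsUnit.prod_iff.2 fun j hj =>
          hunit j (h2 i j (Finset.ne_of_mem_erase hj).symm hi)
      exact h0 i ((hu.mul_left_eq_zero).1 h)
    · push Not at hex
      have hu : IsUnit (∏ j, lam j) := IsUnit.prod_iff.2 fun j _ => hunit j (hex j)
      rw [h] at hu
      exact not_isUnit_zero hu
  · rintro (⟨i, hi⟩ | ⟨i, j, hij, hi, hj⟩)
    · exact Finset.prod_eq_zero (Finset.mem_univ i) hi
    · rw [← Finset.mul_prod_erase _ _ (Finset.mem_univ i),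
        ← Finset.mul_prod_erase _ _ (Finset.mem_erase.2 ⟨hij.symm, Finset.mem_univ j⟩),
        ← mul_assoc]
      have : lam i * lam j = 0 := by
        apply TrivSqZeroExt.ext <;> simp [hi, hj]
      rw [this, zero_mul]

/-- A one-sided inverse of a square matrix over the dual quaternions is two-sided, as they are
finite-dimensional over `ℝ` and hence a Noetherian ring. -/
lemma dq_mul_eq_one_comm {n : ℕ} {U V : Matrix (Fin n) (Fin n) DualQuaternion}
    (h : U * V = 1) : V * U = 1 := by
  have : Module.Finite ℝ DualQuaternion :=
    inferInstanceAs (Module.Finite ℝ (ℍ[ℝ] × ℍ[ℝ]))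
  have : IsScalarTower ℝ DualQuaternion DualQuaternion := ⟨fun r p q => by
    apply TrivSqZeroExt.ext
    · exact smul_mul_assoc r p.fst q.fst
    · change (r • p.fst) * q.snd + (r • p.snd) * q.fst = r • (p.fst * q.snd + p.snd * q.fst)
      rw [smul_mul_assoc, smul_mul_assoc, smul_add]⟩
  have : IsNoetherianRing DualQuaternion := isNoetherian_of_tower ℝ inferInstance
  exact mul_eq_one_symm h

end DualQuaternions

/-- For a dual quaternion Hermitian matrix `A` with eigenvalues `λ₁, …, λ_n`,
`Mdet(A) = 0` iff `A` has at least one zero eigenvalue or two infinitesimal eigenvalues. -/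
theorem statement14 {n : ℕ} (A : Matrix (Fin n) (Fin n) DualQuaternion) (hA : Aᴴ = A)
    (lam : Fin n → DualNumber ℝ) (hlam : HasEigenvalues A lam) :
    Mdet A = 0 ↔
      (∃ i, lam i = 0) ∨ ∃ i j, i ≠ j ∧ (lam i).fst = 0 ∧ (lam j).fst = 0 := by
  obtain ⟨U, hU, hdiag⟩ := hlam
  have hU' : U * Uᴴ = 1 := dq_mul_eq_one_comm hU
  have hAeq : A = Uᴴ * Matrix.diagonal (fun i => toDQ (lam i)) * U := by
    rw [← hdiag, ← mul_assoc, ← mul_assoc, hU, one_mul, mul_assoc, hU, mul_one]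
  let : StarRing DualQuaternion := dqStarRing
  let : Algebra (DualNumber ℝ) DualQuaternion := toDQHom.toAlgebra' toDQ_commutes
  have key : Mdet (Uᴴ * Matrix.diagonal (fun i => toDQ (lam i)) * U) = toDQ (∏ i, lam i) := by
    refine Mdet_conj_diagonal (D := DualNumber ℝ) ?_ ?_ star_toDQ U hU hU' lam
    · intro q hq y
      obtain ⟨d, rfl⟩ := dq_eq_toDQ_of_star_eq q hq
      exact toDQ_commutes d y
    · intro q hq
      rw [← two_smul ℝ] at hq
      exact (smul_eq_zero.1 hq).resolve_left two_ne_zero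
  rw [hAeq, key, toDQ_eq_zero, dualNumber_prod_eq_zero_iff]

end DQPaper
end
end

section
/- Let A = A_s + A_d ε be an n×n dual quaternion Hermitian matrix with eigenvalues λ₁,…,λ_n, and let p(λ) = (λ − λ₁)(λ − λ₂) ⋯ (λ − λ_n) be its characteristic polynomial. A dual number λ = λ_s + λ_d ε is a root of p (i.e., p(λ) = 0) if and only if λ is an eigenvalue of A or λ_s is a multiple eigenvalue of the quaternion Hermitian matrix A_s. -/
/-!
Write `D = diag(λ₁, …, λ_n)` and `U A U* = D` with `U` unitary. Matrices over the dual quaternions,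
a finite-dimensional real algebra, form a Dedekind-finite ring, so `U* U = 1` also gives `U U* = 1`.
Hence `A x = x λ` with `x` appreciable is equivalent to `D y = y λ` with `y = U x` appreciable.
Some coordinate `y_i` is then a unit commuting with dual numbers, so `λ = λ_i`; conversely `U* e_i`
is an eigenvector for `λ_i`. The eigenvalues of `A` are therefore exactly the `λ_i`
(`isEigenvalue_iff`).

It remains to see when a product of dual numbers `λ - λ_i` vanishes (`prod_eq_zero_iff_dual`). A dual
number with nonzero standard part is a unit and the product of two with zero standard part is zero,
so this happens exactly if one factor is zero or two factors have standard part zero.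
-/

/-!
Formalization background for "Moore Determinant of Dual Quaternion Hermitian Matrices"
(Cui, Qi, Song, Wang).

A dual quaternion is `q = q_s + q_d ε` with `q_s, q_d` quaternions, `ε² = 0`; it is modeled
by `DualNumber (Quaternion ℝ)`.
-/

open Quaternion Matrix

noncomputable section

namespace DQPaper

/-- A product of dual numbers vanishes iff a factor is zero or two factors are infinitesimal. -/
theorem prod_eq_zero_iff_dual {n : ℕ} (d : Fin n → DualNumber ℝ) :
    ∏ i, d i = 0 ↔ (∃ i, d i = 0) ∨ ∃ i j, i ≠ j ∧ (d i).fst = 0 ∧ (d j).fst = 0 := by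
  constructor
  · intro h
    by_cases h2 : ∃ i j, i ≠ j ∧ (d i).fst = 0 ∧ (d j).fst = 0
    · exact Or.inr h2
    push Not at h2
    have hfst : ∏ i, (d i).fst = 0 := by
      have := congrArg (TrivSqZeroExt.fstHom ℝ ℝ ℝ) h
      simpa [map_prod] using this
    obtain ⟨i, -, hi⟩ := Finset.prod_eq_zero_iff.mp hfst
    refine Or.inl ⟨i, ?_⟩
    -- All factors other than the `i`-th are units, so the `i`-th one carries the vanishing.
    have hu : IsUnit (∏ j ∈ Finset.univ.erase i, d j) := by
      rw [IsUnit.prod_iff]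
      intro j hj
      rw [TrivSqZeroExt.isUnit_iff_isUnit_fst, isUnit_iff_ne_zero]
      exact h2 i j (Finset.ne_of_mem_erase hj).symm hi
    rw [← Finset.mul_prod_erase _ _ (Finset.mem_univ i)] at h
    exact hu.mul_left_eq_zero.mp h
  · rintro (⟨i, hi⟩ | ⟨i, j, hij, hi, hj⟩)
    · exact Finset.prod_eq_zero (Finset.mem_univ i) hi
    · rw [← Finset.mul_prod_erase _ _ (Finset.mem_univ i),
        ← Finset.mul_prod_erase _ _ (Finset.mem_erase.mpr ⟨hij.symm, Finset.mem_univ j⟩),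
        ← mul_assoc]
      have : d i * d j = 0 := by
        ext <;> simp [hi, hj]
      rw [this, zero_mul]

theorem toDQ_mul_comm (a : DualNumber ℝ) (q : DualQuaternion) : toDQ a * q = q * toDQ a := by
  apply TrivSqZeroExt.ext
  · simp only [TrivSqZeroExt.fst_mul]
    exact Quaternion.coe_commutes _ _
  · simp only [TrivSqZeroExt.snd_mul, smul_eq_mul, MulOpposite.smul_eq_mul_unop,
      MulOpposite.unop_op]
    rw [add_comm]
    exact congrArg₂ (· + ·) (Quaternion.coe_commutes a.snd q.fst)
      (Quaternion.coe_commutes a.fst q.snd)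

theorem toDQ_injective : Function.Injective toDQ := by
  intro a b h
  apply TrivSqZeroExt.ext
  · exact Quaternion.coe_injective (congrArg TrivSqZeroExt.fst h)
  · exact Quaternion.coe_injective (congrArg TrivSqZeroExt.snd h)

theorem mulVec_mul_right {n : ℕ} (M : Matrix (Fin n) (Fin n) DualQuaternion)
    (x : Fin n → DualQuaternion) (c : DualQuaternion) :
    (M *ᵥ fun i => x i * c) = fun i => (M *ᵥ x) i * c := by
  ext1 i
  simp [Matrix.mulVec, dotProduct, Finset.sum_mul, mul_assoc]

/-- A matrix cannot turn a vector with zero standard part into an appreciable one. -/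
theorem appreciable_of_mulVec {n : ℕ} (M : Matrix (Fin n) (Fin n) DualQuaternion)
    (x : Fin n → DualQuaternion) (h : (fun i => ((M *ᵥ x) i).fst) ≠ 0) :
    (fun i => (x i).fst) ≠ 0 := by
  intro hx
  apply h
  ext1 i
  have hx' : ∀ j, (x j).fst = 0 := fun j => congrFun hx j
  change TrivSqZeroExt.fstHom ℝ ℍ[ℝ] ℍ[ℝ] ((M *ᵥ x) i) = 0
  simp [Matrix.mulVec, dotProduct, map_sum, hx']

theorem isEigenvalue_iff {n : ℕ} {A : Matrix (Fin n) (Fin n) DualQuaternion}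
    {lam : Fin n → DualNumber ℝ} (hlam : HasEigenvalues A lam) (l : DualNumber ℝ) :
    IsEigenvalue A l ↔ ∃ i, lam i = l := by
  obtain ⟨U, hU, hD⟩ := hlam
  have hU' : U * Uᴴ = 1 := by
    have : Module.Finite ℝ DualQuaternion := inferInstanceAs (Module.Finite ℝ (ℍ[ℝ] × ℍ[ℝ]))
    have : IsScalarTower ℝ DualQuaternion DualQuaternion :=
      ⟨fun a x y => by apply TrivSqZeroExt.ext <;> simp⟩
    have : IsArtinianRing DualQuaternion := IsArtinianRing.of_finite ℝ _
    exact mul_eq_one_symm hU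
  have hUA : U * A = (Matrix.diagonal fun i => toDQ (lam i)) * U := by
    rw [← hD, mul_assoc, hU, mul_one]
  have hAU : A * Uᴴ = Uᴴ * Matrix.diagonal fun i => toDQ (lam i) := by
    rw [← hD, ← mul_assoc, ← mul_assoc, hU, one_mul]
  constructor
  · rintro ⟨x, hx, hAx⟩
    have hy : (fun i => ((U *ᵥ x) i).fst) ≠ 0 := by
      apply appreciable_of_mulVec Uᴴ
      simpa only [Matrix.mulVec_mulVec, hU, Matrix.one_mulVec] using hx
    obtain ⟨i, hi⟩ := Function.ne_iff.mp hy
    refine ⟨i, toDQ_injective ?_⟩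
    have h := congrFun (congrArg (U *ᵥ ·) hAx) i
    simp only [Matrix.mulVec_mulVec, hUA, mulVec_mul_right] at h
    rw [← Matrix.mulVec_mulVec, Matrix.mulVec_diagonal, toDQ_mul_comm] at h
    have hu : IsUnit ((U *ᵥ x) i) :=
      TrivSqZeroExt.isUnit_iff_isUnit_fst.mpr (isUnit_iff_ne_zero.mpr hi)
    exact hu.mul_left_cancel h
  · rintro ⟨i, rfl⟩
    refine ⟨Uᴴ *ᵥ Pi.single i 1, ?_, ?_⟩
    · apply appreciable_of_mulVec U
      rw [Matrix.mulVec_mulVec, hU', Matrix.one_mulVec]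
      intro h
      simpa using congrFun h i
    · rw [Matrix.mulVec_mulVec, hAU, ← Matrix.mulVec_mulVec, ← mulVec_mul_right]
      congr 1
      ext1 j
      rw [Matrix.mulVec_diagonal]
      by_cases hj : j = i
      · subst hj; simp
      · simp [hj]

/-- A dual number `λ` is a root of the characteristic polynomial
`p(λ) = (λ − λ₁) ⋯ (λ − λ_n)` of a dual quaternion Hermitian matrix `A` iff `λ` is an
eigenvalue of `A`, or the standard part of `λ` is a multiple eigenvalue of the standard
part of `A` (i.e. it occurs at least twice among the standard parts `λ_{i,s}` of the
eigenvalues of `A`, which are exactly the eigenvalues of `A_s` with multiplicity). -/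
theorem statement16 {n : ℕ} (A : Matrix (Fin n) (Fin n) DualQuaternion) (hA : Aᴴ = A)
    (lam : Fin n → DualNumber ℝ) (hlam : HasEigenvalues A lam) (l : DualNumber ℝ) :
    (∏ i, (l - lam i)) = 0 ↔
      IsEigenvalue A l ∨
        ∃ i j, i ≠ j ∧ (lam i).fst = l.fst ∧ (lam j).fst = l.fst := by
  rw [prod_eq_zero_iff_dual, isEigenvalue_iff hlam]
  simp only [TrivSqZeroExt.fst_sub, sub_eq_zero, eq_comm (a := l), eq_comm (a := l.fst)]

end DQPaper
end
end
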